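/- Let ζ ∈ (-1/2, ∞) and α ∈ (0,2). Then there exist constants c, C > 0 (depending only on ζ and α) such that for all r, s, t > 0: c · t / (|r-s|^{1+α}(r+s)^{2ζ} + t^{(1+α)/α}(t^{1/α} + r + s)^{2ζ}) ≤ p_ζ^{(α)}(t,r,s) ≤ C · t / (|r-s|^{1+α}(r+s)^{2ζ} + t^{(1+α)/α}(t^{1/α} + r + s)^{2ζ}). -/

import Mathlib

open MeasureTheory Real Set Filter

/-- Modified Bessel function of the first kind of order `ν`. -/
noncomputable def besselI (ν x : ℝ) : ℝ :=
  ∑' k : ℕ, (x / 2) ^ (2 * (k : ℝ) + ν) / ((Nat.factorial k : ℝ) * Real.Gamma ((k : ℝ) + ν + 1))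

/-- The Bessel heat kernel `p_ζ^{(2)}(t,r,s)`. -/
noncomputable def besselHeat (ζ t r s : ℝ) : ℝ :=
  (r * s) ^ ((1 : ℝ) / 2 - ζ) / (2 * t) * Real.exp (-(r ^ 2 + s ^ 2) / (4 * t)) *
    besselI (ζ - 1 / 2) (r * s / (2 * t))

/-- `σ` is a family of `α/2`-stable subordinator densities. -/
def IsStableSubordinatorDensity (α : ℝ) (σ : ℝ → ℝ → ℝ) : Prop :=
  (∀ t, 0 < t → ∀ τ, 0 < τ → 0 ≤ σ t τ) ∧
  (∀ t, 0 < t → Measurable (σ t)) ∧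
  (∀ t l : ℝ, 0 < t → 0 ≤ l →
    (∫ τ in Ioi (0 : ℝ), Real.exp (-τ * l) * σ t τ) = Real.exp (-t * l ^ (α / 2)))

/-- The `α/2`-subordinated Bessel heat kernel `p_ζ^{(α)}(t,r,s)`. -/
noncomputable def subKernel (ζ : ℝ) (σ : ℝ → ℝ → ℝ) (t r s : ℝ) : ℝ :=
  ∫ τ in Ioi (0 : ℝ), besselHeat ζ τ r s * σ t τ

/-!
Comparing the series of `I_ν` term by term with that of `cosh` gives
`I_ν x ≍ x ^ ν * (1 + x) ^ (-(ν + 1 / 2)) * exp x`, so with `b ≍ (r + s) ^ 2` and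
`k ≍ (r - s) ^ 2` the Bessel heat kernel is comparable to
`τ ^ (-1/2) * (τ + b) ^ (-ζ) * exp (-k / τ)`, up to constants in the exponent. It remains to average
this weight against the stable law `μ` with `∫ exp (-τ l) dμ = exp (-t l ^ β)`, `β = α / 2`, using
only its Laplace transform. The negative moments of `μ` are explicit, which bounds the average when
`k ≤ t ^ (1 / β)`; otherwise the weight is at most a multiple of `1 - exp (-τ / k)`, whose average
is at most `t * k ^ (-β)`. For the lower bound, comparing Laplace transforms at three points shows
that `μ` gives mass at least `t * a ^ (-β) / 4` to times of order `a := max k (t ^ (1 / β))`.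
-/

open scoped Nat Asymptotics

lemma exists_one_add_rpow_le_mul_exp (q : ℝ) {δ : ℝ} (hδ : 0 < δ) :
    ∃ C > 0, ∀ v, 0 ≤ v → (1 + v) ^ q ≤ C * exp (δ * v) := by
  refine ⟨⌈q⌉₊ ! / δ ^ ⌈q⌉₊ * exp δ, by positivity, fun v hv => ?_⟩
  have h := pow_div_factorial_le_exp (δ * (1 + v)) (by positivity) ⌈q⌉₊
  rw [div_le_iff₀ (by positivity), mul_pow] at h
  calc (1 + v) ^ q ≤ (1 + v) ^ ⌈q⌉₊ := by
        rw [← rpow_natCast]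
        exact rpow_le_rpow_of_exponent_le (by linarith) (Nat.le_ceil q)
    _ ≤ exp (δ * (1 + v)) * ⌈q⌉₊ ! / δ ^ ⌈q⌉₊ := by rwa [le_div_iff₀' (by positivity)]
    _ = ⌈q⌉₊ ! / δ ^ ⌈q⌉₊ * exp δ * exp (δ * v) := by rw [mul_add, mul_one, exp_add]; ring

lemma rpow_le_rpow_abs_mul_rpow {x y m : ℝ} (q : ℝ) (hx : 0 < x) (hy : 0 < y)
    (hxy : x ≤ m * y) (hyx : y ≤ m * x) : x ^ q ≤ m ^ |q| * y ^ q := by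
  have hm : 0 < m := pos_of_mul_pos_left (hx.trans_le hxy) hy.le
  rcases le_total 0 q with hq | hq
  · rw [abs_of_nonneg hq, ← mul_rpow hm.le hy.le]
    exact rpow_le_rpow hx.le hxy hq
  · rw [abs_of_nonpos hq, rpow_neg hm.le, ← inv_rpow hm.le, ← mul_rpow (by positivity) hy.le]
    exact rpow_le_rpow_of_nonpos (by positivity) ((inv_mul_le_iff₀ hm).2 hyx) hq

lemma div_one_add_le_one_sub_exp_neg {u : ℝ} (hu : 0 ≤ u) : u / (1 + u) ≤ 1 - exp (-u) := by
  have h : exp (-u) ≤ (1 + u)⁻¹ := by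
    rw [exp_neg]
    exact inv_anti₀ (by positivity) (by linarith [add_one_le_exp u])
  calc u / (1 + u) = 1 - (1 + u)⁻¹ := by field_simp; ring
    _ ≤ 1 - exp (-u) := by linarith

lemma half_le_one_sub_exp_neg {u : ℝ} (hu : 0 ≤ u) (hu1 : u ≤ 1) : u / 2 ≤ 1 - exp (-u) :=
  (div_le_div_of_nonneg_left hu (by positivity) (by linarith)).trans
    (div_one_add_le_one_sub_exp_neg hu)

lemma cosh_le_exp {x : ℝ} (hx : 0 ≤ x) : cosh x ≤ exp x := by
  rw [cosh_eq]
  linarith [exp_le_exp.2 (show -x ≤ x by linarith)]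

lemma exp_le_two_mul_cosh (x : ℝ) : exp x ≤ 2 * cosh x := by
  rw [cosh_eq]
  linarith [exp_pos (-x)]

lemma prod_range_add_eq_Gamma_div {s : ℝ} (hs : 0 < s) (n : ℕ) :
    ∏ j ∈ Finset.range n, (s + j) = Gamma (s + n) / Gamma s := by
  induction n with
  | zero => simp [(Gamma_pos_of_pos hs).ne']
  | succ n ih =>
    rw [Finset.prod_range_succ, ih, Nat.cast_succ, ← add_assoc, Gamma_add_one (by positivity)]
    ring

lemma isEquivalent_Gamma_natCast_add {s : ℝ} (hs : 0 < s) :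
    (fun n : ℕ => Gamma (n + s)) ~[atTop] fun n => ((n : ℝ) + 1) ^ (s - 1) * n ! := by
  have hΓ := Gamma_pos_of_pos hs
  refine Asymptotics.isEquivalent_of_tendsto_one ?_
  have h := (((tendsto_const_nhds (x := Gamma s)).div (GammaSeq_tendsto_Gamma s) hΓ.ne').mul
    ((tendsto_natCast_div_add_atTop (1 : ℝ)).rpow_const (p := s - 1) (Or.inl one_ne_zero))).mul
    (tendsto_natCast_div_add_atTop s)
  rw [div_self hΓ.ne', one_rpow, one_mul, one_mul] at h
  refine h.congr' ?_
  filter_upwards [eventually_gt_atTop 0] with n hn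
  have hn' : (0 : ℝ) < n := Nat.cast_pos.2 hn
  have hprod := prod_range_add_eq_Gamma_div hs (n + 1)
  rw [Nat.cast_succ, ← add_assoc, Gamma_add_one (by positivity), add_comm s] at hprod
  have : 0 < Gamma (n + s) := Gamma_pos_of_pos (by positivity)
  simp only [Pi.div_apply, GammaSeq]
  rw [hprod, div_rpow (by positivity) (by positivity), rpow_sub_one hn'.ne']
  field_simp

lemma four_pow_mul_factorial_mul_Gamma_add_half (k : ℕ) :
    4 ^ k * k ! * Gamma (k + 1 / 2) = √π * (2 * k)! := by
  have h := Gamma_mul_Gamma_add_half ((k : ℝ) + 1 / 2)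
  rw [show (k : ℝ) + 1 / 2 + 1 / 2 = k + 1 by ring, Gamma_nat_eq_factorial,
    show 2 * ((k : ℝ) + 1 / 2) = ((2 * k : ℕ) : ℝ) + 1 by push_cast; ring,
    Gamma_nat_eq_factorial, show 1 - (((2 * k : ℕ) : ℝ) + 1) = -((2 * k : ℕ) : ℝ) by ring,
    rpow_neg zero_le_two, rpow_natCast, pow_mul, show (2 : ℝ) ^ 2 = 4 by norm_num] at h
  calc 4 ^ k * k ! * Gamma (k + 1 / 2) = 4 ^ k * (Gamma (k + 1 / 2) * k !) := by ring
    _ = √π * (2 * k)! := by rw [h]; field_simp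

lemma exists_bounds_of_isTheta_atTop {f g : ℕ → ℝ} (hf : ∀ n, 0 < f n) (hg : ∀ n, 0 < g n)
    (h : f =Θ[atTop] g) : ∃ c > 0, ∃ C > 0, ∀ n, c * g n ≤ f n ∧ f n ≤ C * g n := by
  obtain ⟨C, hC, hfg⟩ := Asymptotics.bound_of_isBigO_nat_atTop h.1
  obtain ⟨D, hD, hgf⟩ := Asymptotics.bound_of_isBigO_nat_atTop h.2
  refine ⟨D⁻¹, inv_pos.2 hD, C, hC, fun n => ⟨(inv_mul_le_iff₀ hD).2 ?_, ?_⟩⟩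
  · simpa only [norm_of_nonneg (hf n).le, norm_of_nonneg (hg n).le] using hgf (hf n).ne'
  · simpa only [norm_of_nonneg (hf n).le, norm_of_nonneg (hg n).le] using hfg (hg n).ne'

lemma isEquivalent_four_pow_mul_factorial_mul_Gamma {ν : ℝ} (hν : -1 < ν) :
    (fun k : ℕ => 4 ^ k * k ! * Gamma (k + ν + 1)) ~[atTop]
      fun k => √π * ((2 * k)! * ((k : ℝ) + 1) ^ (ν + 1 / 2)) := by
  have hΓ := (isEquivalent_Gamma_natCast_add (show 0 < ν + 1 by linarith)).div
    (isEquivalent_Gamma_natCast_add one_half_pos)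
  have h := (Asymptotics.IsEquivalent.refl (u := fun k : ℕ => √π * ((2 * k)! : ℝ))).mul hΓ
  refine (h.congr_left ?_).congr_right ?_ <;> filter_upwards with k
  · have : 0 < Gamma ((k : ℝ) + 1 / 2) := Gamma_pos_of_pos (by positivity)
    simp only [Pi.mul_apply, Pi.div_apply]
    rw [← four_pow_mul_factorial_mul_Gamma_add_half, ← add_assoc]
    field_simp
  · have hpow : ((k : ℝ) + 1) ^ (ν + 1 / 2) =
        ((k : ℝ) + 1) ^ (ν + 1 - 1) / ((k : ℝ) + 1) ^ ((1 : ℝ) / 2 - 1) := by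
      rw [← rpow_sub (by positivity)]
      ring_nf
    simp only [Pi.mul_apply, Pi.div_apply]
    rw [hpow]
    field_simp

lemma exists_bounds_four_pow_mul_factorial_mul_Gamma {ν : ℝ} (hν : -1 < ν) :
    ∃ c > 0, ∃ C > 0, ∀ k : ℕ,
      c * ((2 * k)! * ((k : ℝ) + 1) ^ (ν + 1 / 2)) ≤ 4 ^ k * k ! * Gamma (k + ν + 1) ∧
        4 ^ k * k ! * Gamma (k + ν + 1) ≤ C * ((2 * k)! * ((k : ℝ) + 1) ^ (ν + 1 / 2)) := by
  refine exists_bounds_of_isTheta_atTop (fun k => ?_) (fun k => by positivity)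
    ((isEquivalent_four_pow_mul_factorial_mul_Gamma hν).isTheta.trans
      ((Asymptotics.isTheta_refl _ _).const_mul_left (by positivity)))
  have : 0 < Gamma (k + ν + 1) := Gamma_pos_of_pos (by linarith [k.cast_nonneg (α := ℝ)])
  positivity

/-! ### The weighted `cosh` series -/

/-- The `k`-th term of the series of `cosh x`, weighted by the `q`-th power of `(k + 1) / (1 + x)`.
The terms of `cosh x` concentrate around `k = x / 2`, so the weight is harmless and the sum remains
of order `exp x`. -/
noncomputable def coshTerm (q x : ℝ) (k : ℕ) : ℝ :=
  x ^ (2 * k) / (2 * k)! * ((k + 1) / (1 + x)) ^ q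

lemma coshTerm_nonneg (q : ℝ) {x : ℝ} (hx : 0 ≤ x) (k : ℕ) : 0 ≤ coshTerm q x k := by
  unfold coshTerm
  positivity

lemma hasSum_cosh_mul_exp (x d : ℝ) :
    HasSum (fun k : ℕ => x ^ (2 * k) / (2 * k)! * exp (2 * d * k)) (cosh (x * exp d)) := by
  convert! Real.hasSum_cosh (x * exp d) using 2 with k
  rw [mul_pow, ← exp_nat_mul]
  push_cast
  ring_nf

lemma mul_exp_one_div_le {x : ℝ} (hx : 0 ≤ x) : x * exp (1 / (2 * (1 + x))) ≤ x + 1 := by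
  have hd : 1 / (2 * (1 + x)) < 1 := by rw [div_lt_one (by positivity)]; linarith
  calc x * exp (1 / (2 * (1 + x))) ≤ x * (1 / (1 - 1 / (2 * (1 + x)))) := by
        gcongr
        exact exp_bound_div_one_sub_of_interval (by positivity) hd
    _ = x * (2 * (1 + x) / (1 + 2 * x)) := by
        have : 1 - 1 / (2 * (1 + x)) = (1 + 2 * x) / (2 * (1 + x)) := by field_simp; ring
        rw [this, one_div_div]
    _ ≤ x + 1 := by
        rw [← mul_div_assoc, div_le_iff₀ (by positivity)]
        nlinarith

lemma exists_tsum_coshTerm_le_of_nonneg {q : ℝ} (hq : 0 ≤ q) :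
    ∃ C > 0, ∀ x, 0 ≤ x → Summable (coshTerm q x) ∧ ∑' k, coshTerm q x k ≤ C * exp x := by
  obtain ⟨C, hC, hCexp⟩ := exists_one_add_rpow_le_mul_exp q one_pos
  refine ⟨C * exp 2, by positivity, fun x hx => ?_⟩
  set d := 1 / (2 * (1 + x))
  have hd : 2 * d ≤ 1 := by
    rw [← mul_div_assoc, mul_one, div_le_one (by positivity)]
    linarith
  have hsum := (hasSum_cosh_mul_exp x d).mul_left (C * exp 1)
  have hle : ∀ k, coshTerm q x k ≤
      C * exp 1 * (x ^ (2 * k) / (2 * k)! * exp (2 * d * k)) := fun k => by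
    have hy : ((k : ℝ) + 1) / (1 + x) = 2 * d * k + 2 * d := by simp only [d]; field_simp
    calc coshTerm q x k ≤ x ^ (2 * k) / (2 * k)! * (1 + ((k : ℝ) + 1) / (1 + x)) ^ q := by
          unfold coshTerm
          gcongr
          linarith
      _ ≤ x ^ (2 * k) / (2 * k)! * (C * exp (1 * (2 * d * k + 1))) := by
          refine mul_le_mul_of_nonneg_left ((hCexp _ (by positivity)).trans ?_) (by positivity)
          gcongr
          rw [hy]
          gcongr
      _ = C * exp 1 * (x ^ (2 * k) / (2 * k)! * exp (2 * d * k)) := by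
          rw [one_mul, exp_add]
          ring
  have hs := hsum.summable.of_nonneg_of_le (coshTerm_nonneg q hx) hle
  refine ⟨hs, ?_⟩
  calc ∑' k, coshTerm q x k ≤ C * exp 1 * cosh (x * exp d) :=
        (hs.tsum_le_tsum hle hsum.summable).trans_eq hsum.tsum_eq
    _ ≤ C * exp 1 * exp (x + 1) := by
        gcongr
        exact (cosh_le_exp (by positivity)).trans (exp_le_exp.2 (mul_exp_one_div_le hx))
    _ = C * exp 2 * exp x := by
        rw [mul_assoc, mul_assoc, ← exp_add, ← exp_add]
        ring_nf

lemma div_rpow_neg_le_add {q x y : ℝ} (hq : 0 ≤ q) (hx : 0 ≤ x) (hy : 1 ≤ y) :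
    (y / (1 + x)) ^ (-q) ≤ 8 ^ q + (1 + x) ^ q * exp ((1 + x) / 4 - 2 * y) := by
  rw [rpow_neg (by positivity), ← inv_rpow (by positivity), inv_div]
  rcases le_total (1 + x) (8 * y) with h | h
  · have : (1 + x) / y ≤ 8 := (div_le_iff₀ (by positivity)).2 h
    exact (rpow_le_rpow (by positivity) this hq).trans (le_add_of_nonneg_right (by positivity))
  · have h1 : 1 ≤ exp ((1 + x) / 4 - 2 * y) := one_le_exp (by linarith)
    calc ((1 + x) / y) ^ q ≤ (1 + x) ^ q := by gcongr; exact div_le_self (by positivity) hy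
      _ ≤ (1 + x) ^ q * exp ((1 + x) / 4 - 2 * y) := le_mul_of_one_le_right (by positivity) h1
      _ ≤ _ := le_add_of_nonneg_left (by positivity)

lemma exists_tsum_coshTerm_neg_le {q : ℝ} (hq : 0 ≤ q) :
    ∃ C > 0, ∀ x, 0 ≤ x → Summable (coshTerm (-q) x) ∧ ∑' k, coshTerm (-q) x k ≤ C * exp x := by
  obtain ⟨C, hC, hCexp⟩ := exists_one_add_rpow_le_mul_exp q (show (0 : ℝ) < 1 / 4 by norm_num)
  refine ⟨8 ^ q + C * exp (1 / 4), by positivity, fun x hx => ?_⟩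
  have hsum := ((Real.hasSum_cosh x).mul_left (8 ^ q)).add
    ((hasSum_cosh_mul_exp x (-1)).mul_left ((1 + x) ^ q * exp ((1 + x) / 4)))
  have hle : ∀ k, coshTerm (-q) x k ≤ 8 ^ q * (x ^ (2 * k) / (2 * k)!) +
      (1 + x) ^ q * exp ((1 + x) / 4) * (x ^ (2 * k) / (2 * k)! * exp (2 * (-1) * k)) := fun k => by
    have hexp : exp ((1 + x) / 4 - 2 * (k + 1)) ≤ exp ((1 + x) / 4) * exp (2 * (-1) * k) := by
      rw [← exp_add]
      gcongr
      linarith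
    calc coshTerm (-q) x k ≤ x ^ (2 * k) / (2 * k)! *
          (8 ^ q + (1 + x) ^ q * exp ((1 + x) / 4 - 2 * (k + 1))) := by
          unfold coshTerm
          gcongr
          exact div_rpow_neg_le_add hq hx (by linarith [k.cast_nonneg (α := ℝ)])
      _ ≤ x ^ (2 * k) / (2 * k)! *
          (8 ^ q + (1 + x) ^ q * (exp ((1 + x) / 4) * exp (2 * (-1) * k))) := by gcongr
      _ = _ := by ring
  have hs := hsum.summable.of_nonneg_of_le (coshTerm_nonneg _ hx) hle
  refine ⟨hs, ?_⟩
  have hcosh : cosh (x * exp (-1)) ≤ exp (x / 2) := by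
    refine (cosh_le_exp (by positivity)).trans (exp_le_exp.2 ?_)
    nlinarith [exp_neg_one_lt_half]
  calc ∑' k, coshTerm (-q) x k
      ≤ 8 ^ q * cosh x + (1 + x) ^ q * exp ((1 + x) / 4) * cosh (x * exp (-1)) :=
        (hs.tsum_le_tsum hle hsum.summable).trans_eq hsum.tsum_eq
    _ ≤ 8 ^ q * exp x + C * exp (1 / 4 * x) * exp ((1 + x) / 4) * exp (x / 2) := by
        gcongr
        · exact cosh_le_exp hx
        · exact hCexp x hx
    _ = 8 ^ q * exp x + C * (exp (1 / 4 * x) * exp ((1 + x) / 4) * exp (x / 2)) := by ring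
    _ = (8 ^ q + C * exp (1 / 4)) * exp x := by
        rw [← exp_add, ← exp_add, add_mul, mul_assoc C, ← exp_add]
        ring_nf

lemma exists_tsum_coshTerm_le (q : ℝ) :
    ∃ C > 0, ∀ x, 0 ≤ x → Summable (coshTerm q x) ∧ ∑' k, coshTerm q x k ≤ C * exp x := by
  rcases le_total 0 q with hq | hq
  · exact exists_tsum_coshTerm_le_of_nonneg hq
  · simpa only [neg_neg] using exists_tsum_coshTerm_neg_le (neg_nonneg.2 hq)

lemma one_le_mul_add_inv_div {B z : ℝ} (hB : 0 < B) (hz : 0 < z) : 1 ≤ B * z + z⁻¹ / (4 * B) := by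
  have h : B * z + z⁻¹ / (4 * B) - 1 = (2 * B * z - 1) ^ 2 / (4 * B * z) := by field_simp; ring
  have : 0 ≤ (2 * B * z - 1) ^ 2 / (4 * B * z) := by positivity
  linarith

lemma exists_le_tsum_coshTerm (q : ℝ) :
    ∃ c > 0, ∀ x, 0 ≤ x → c * exp x ≤ ∑' k, coshTerm q x k := by
  obtain ⟨_, -, hq⟩ := exists_tsum_coshTerm_le q
  obtain ⟨B, hB, hqneg⟩ := exists_tsum_coshTerm_le (-q)
  refine ⟨1 / (4 * B), by positivity, fun x hx => ?_⟩
  have hs := (hq x hx).1.mul_left B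
  have hs' := (hqneg x hx).1.div_const (4 * B)
  have hle : ∀ k : ℕ, x ^ (2 * k) / (2 * k)! ≤
      B * coshTerm q x k + coshTerm (-q) x k / (4 * B) := fun k => by
    have hz : 0 < (((k : ℝ) + 1) / (1 + x)) ^ q := by positivity
    calc x ^ (2 * k) / (2 * k)! ≤ x ^ (2 * k) / (2 * k)! * (B * (((k : ℝ) + 1) / (1 + x)) ^ q +
          ((((k : ℝ) + 1) / (1 + x)) ^ q)⁻¹ / (4 * B)) :=
          le_mul_of_one_le_right (by positivity) (one_le_mul_add_inv_div hB hz)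
      _ = B * coshTerm q x k + coshTerm (-q) x k / (4 * B) := by
          rw [coshTerm, coshTerm, rpow_neg (by positivity)]
          ring
  have hcosh : cosh x ≤ B * ∑' k, coshTerm q x k + exp x / 4 := calc
    cosh x ≤ B * ∑' k, coshTerm q x k + (∑' k, coshTerm (-q) x k) / (4 * B) := by
        rw [cosh_eq_tsum, ← tsum_mul_left, ← tsum_div_const, ← hs.tsum_add hs']
        exact (Real.hasSum_cosh x).summable.tsum_le_tsum hle (hs.add hs')
    _ ≤ B * ∑' k, coshTerm q x k + B * exp x / (4 * B) := by
        gcongr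
        exact (hqneg x hx).2
    _ = B * ∑' k, coshTerm q x k + exp x / 4 := by field_simp
  rw [div_mul_eq_mul_div, one_mul, div_le_iff₀ (by positivity)]
  linarith [exp_le_two_mul_cosh x]

/-! ### The modified Bessel function and the Bessel heat kernel -/

lemma besselI_nonneg {ν x : ℝ} (hν : -1 < ν) (hx : 0 ≤ x) : 0 ≤ besselI ν x :=
  tsum_nonneg fun k => by
    have hΓ : 0 < Gamma (k + ν + 1) :=
      Gamma_pos_of_pos (by linarith [(Nat.cast_nonneg k : (0 : ℝ) ≤ k)])
    positivity

lemma measurable_besselI (ν : ℝ) : Measurable (besselI ν) :=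
  Measurable.tsum fun k => by fun_prop

lemma rpow_mul_coshTerm_eq {ν x : ℝ} (hx : 0 < x) (k : ℕ) :
    x ^ ν * (1 + x) ^ (-(ν + 1 / 2)) * coshTerm (-(ν + 1 / 2)) x k =
      2 ^ ν * ((x / 2) ^ (2 * (k : ℝ) + ν) *
        (4 ^ k / ((2 * k)! * ((k : ℝ) + 1) ^ (ν + 1 / 2)))) := by
  have hk : (0 : ℝ) < (k : ℝ) + 1 := by positivity
  have hx1 : (0 : ℝ) < 1 + x := by positivity
  rw [coshTerm, div_rpow hk.le hx1.le, rpow_neg hk.le, rpow_neg hx1.le,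
    rpow_add (x := x / 2) (by positivity),
    show (2 : ℝ) * k = ((2 * k : ℕ) : ℝ) by push_cast; ring, rpow_natCast, div_pow, pow_mul 2,
    show (2 : ℝ) ^ 2 = 4 by norm_num, div_rpow hx.le zero_le_two]
  field_simp

lemma exists_besselI_term_bounds {ν : ℝ} (hν : -1 < ν) :
    ∃ c > 0, ∃ C > 0, ∀ x, 0 < x → ∀ k : ℕ,
      c * (x ^ ν * (1 + x) ^ (-(ν + 1 / 2)) * coshTerm (-(ν + 1 / 2)) x k) ≤
          (x / 2) ^ (2 * (k : ℝ) + ν) / (k ! * Gamma (k + ν + 1)) ∧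
        (x / 2) ^ (2 * (k : ℝ) + ν) / (k ! * Gamma (k + ν + 1)) ≤
          C * (x ^ ν * (1 + x) ^ (-(ν + 1 / 2)) * coshTerm (-(ν + 1 / 2)) x k) := by
  obtain ⟨c, hc, C, hC, h⟩ := exists_bounds_four_pow_mul_factorial_mul_Gamma hν
  refine ⟨(C * 2 ^ ν)⁻¹, by positivity, (c * 2 ^ ν)⁻¹, by positivity, fun x hx k => ?_⟩
  obtain ⟨hlower, hupper⟩ := h k
  have hΓ : 0 < Gamma (k + ν + 1) := Gamma_pos_of_pos (by linarith [k.cast_nonneg (α := ℝ)])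
  have hterm : (x / 2) ^ (2 * (k : ℝ) + ν) / (k ! * Gamma (k + ν + 1)) =
      (x / 2) ^ (2 * (k : ℝ) + ν) * (4 ^ k / (4 ^ k * k ! * Gamma (k + ν + 1))) := by
    field_simp
  have hscale : ∀ a > 0, (a * 2 ^ ν)⁻¹ * (x ^ ν * (1 + x) ^ (-(ν + 1 / 2)) *
      coshTerm (-(ν + 1 / 2)) x k) = (x / 2) ^ (2 * (k : ℝ) + ν) *
        (4 ^ k / (a * ((2 * k)! * ((k : ℝ) + 1) ^ (ν + 1 / 2)))) := fun a ha => by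
    rw [rpow_mul_coshTerm_eq hx]
    field_simp
  rw [hterm, hscale C hC, hscale c hc]
  constructor <;> gcongr

lemma exists_besselI_bounds {ν : ℝ} (hν : -1 < ν) :
    ∃ c > 0, ∃ C > 0, ∀ x, 0 < x →
      c * (x ^ ν * (1 + x) ^ (-(ν + 1 / 2)) * exp x) ≤ besselI ν x ∧
        besselI ν x ≤ C * (x ^ ν * (1 + x) ^ (-(ν + 1 / 2)) * exp x) := by
  obtain ⟨a, ha, A, hA, hterm⟩ := exists_besselI_term_bounds hν
  obtain ⟨b, hb, hlower⟩ := exists_le_tsum_coshTerm (-(ν + 1 / 2))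
  obtain ⟨B, hB, hupper⟩ := exists_tsum_coshTerm_le (-(ν + 1 / 2))
  refine ⟨a * b, by positivity, A * B, by positivity, fun x hx => ?_⟩
  obtain ⟨hsum, hle⟩ := hupper x hx.le
  have hge := hlower x hx.le
  set P := x ^ ν * (1 + x) ^ (-(ν + 1 / 2))
  have hP : 0 < P := by positivity
  have hsa := (hsum.mul_left P).mul_left a
  have hsA := (hsum.mul_left P).mul_left A
  have hs : Summable fun k : ℕ => (x / 2) ^ (2 * (k : ℝ) + ν) / (k ! * Gamma (k + ν + 1)) :=
    hsA.of_nonneg_of_le (fun k => (mul_nonneg ha.le (mul_nonneg hP.le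
      (coshTerm_nonneg _ hx.le k))).trans (hterm x hx k).1) fun k => (hterm x hx k).2
  constructor
  · calc a * b * (P * exp x) = a * (P * (b * exp x)) := by ring
      _ ≤ a * (P * ∑' k, coshTerm (-(ν + 1 / 2)) x k) := by gcongr
      _ ≤ besselI ν x := by
        rw [← tsum_mul_left, ← tsum_mul_left]
        exact hsa.tsum_le_tsum (fun k => (hterm x hx k).1) hs
  · calc besselI ν x ≤ A * (P * ∑' k, coshTerm (-(ν + 1 / 2)) x k) := by
          rw [← tsum_mul_left, ← tsum_mul_left]
          exact hs.tsum_le_tsum (fun k => (hterm x hx k).2) hsA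
      _ ≤ A * (P * (B * exp x)) := by gcongr
      _ = A * B * (P * exp x) := by ring

/-- The profile `τ ^ (-1/2) * (τ + b) ^ (-ζ) * exp (-k / τ)` of the Bessel heat kernel as a function
of time; `k` is a squared distance and `b` measures the squared distance to the origin. -/
noncomputable def gaussWeight (ζ b k τ : ℝ) : ℝ :=
  τ ^ (-(1 / 2) : ℝ) * (τ + b) ^ (-ζ) * exp (-(k / τ))

@[fun_prop]
lemma measurable_gaussWeight (ζ b k : ℝ) : Measurable (gaussWeight ζ b k) := by
  unfold gaussWeight
  fun_prop

lemma gaussWeight_nonneg (ζ k : ℝ) {b τ : ℝ} (hb : 0 ≤ b) (hτ : 0 < τ) :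
    0 ≤ gaussWeight ζ b k τ := by
  unfold gaussWeight
  positivity

lemma besselHeat_nonneg {ζ r s τ : ℝ} (hζ : -1 / 2 < ζ) (hr : 0 ≤ r) (hs : 0 ≤ s) (hτ : 0 ≤ τ) :
    0 ≤ besselHeat ζ τ r s := by
  have hbessel : 0 ≤ besselI (ζ - 1 / 2) (r * s / (2 * τ)) :=
    besselI_nonneg (by linarith) (by positivity)
  unfold besselHeat
  positivity

lemma besselHeat_profile_eq (ζ : ℝ) {r s τ : ℝ} (hr : 0 < r) (hs : 0 < s) (hτ : 0 < τ) :
    (r * s) ^ (1 / 2 - ζ) / (2 * τ) * exp (-(r ^ 2 + s ^ 2) / (4 * τ)) *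
        ((r * s / (2 * τ)) ^ (ζ - 1 / 2) * (1 + r * s / (2 * τ)) ^ (-ζ) *
          exp (r * s / (2 * τ))) =
      2 ^ (-(1 / 2) - ζ) * gaussWeight ζ (r * s / 2) ((r - s) ^ 2 / 4) τ := by
  have hrs : 0 < r * s := mul_pos hr hs
  have hexp : exp (-(r ^ 2 + s ^ 2) / (4 * τ)) * exp (r * s / (2 * τ)) =
      exp (-((r - s) ^ 2 / 4 / τ)) := by
    rw [← exp_add]
    congr 1
    field_simp
    ring
  have hbase : (1 + r * s / (2 * τ)) ^ (-ζ) = (τ + r * s / 2) ^ (-ζ) * τ ^ ζ := by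
    rw [show 1 + r * s / (2 * τ) = (τ + r * s / 2) / τ by field_simp,
      div_rpow (by positivity) hτ.le, rpow_neg hτ.le, div_inv_eq_mul]
  have hτpow : τ ^ (-(1 / 2) : ℝ) = τ ^ ζ / (τ ^ (ζ - 1 / 2) * τ) := by
    rw [← rpow_add_one hτ.ne', ← rpow_sub hτ]
    ring_nf
  have h2pow : (2 : ℝ) ^ (-(1 / 2) - ζ) = (2 ^ (ζ - 1 / 2) * 2)⁻¹ := by
    rw [← rpow_add_one two_ne_zero, ← rpow_neg zero_le_two]
    ring_nf
  rw [gaussWeight, ← hexp, hbase, hτpow, h2pow, div_rpow hrs.le (by positivity),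
    mul_rpow zero_le_two hτ.le, ← neg_sub ζ, rpow_neg hrs.le]
  have : (0 : ℝ) < (r * s) ^ (ζ - 1 / 2) := by positivity
  field_simp

lemma exists_besselHeat_bounds {ζ : ℝ} (hζ : -1 / 2 < ζ) :
    ∃ c > 0, ∃ C > 0, ∀ r s τ : ℝ, 0 < r → 0 < s → 0 < τ →
      c * gaussWeight ζ (r * s / 2) ((r - s) ^ 2 / 4) τ ≤ besselHeat ζ τ r s ∧
        besselHeat ζ τ r s ≤ C * gaussWeight ζ (r * s / 2) ((r - s) ^ 2 / 4) τ := by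
  obtain ⟨c, hc, C, hC, h⟩ := exists_besselI_bounds (show -1 < ζ - 1 / 2 by linarith)
  rw [sub_add_cancel] at h
  refine ⟨c * 2 ^ (-(1 / 2) - ζ), by positivity, C * 2 ^ (-(1 / 2) - ζ), by positivity,
    fun r s τ hr hs hτ => ?_⟩
  obtain ⟨hlower, hupper⟩ := h (r * s / (2 * τ)) (by positivity)
  rw [mul_assoc c, mul_assoc C, ← besselHeat_profile_eq ζ hr hs hτ, mul_left_comm c,
    mul_left_comm C]
  constructor <;> unfold besselHeat <;> gcongr

lemma exists_gaussWeight_add_le (ζ : ℝ) :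
    ∃ C > 0, ∀ a b k l τ : ℝ, 0 ≤ a → 0 ≤ b → |a - b| ≤ k → 0 < τ →
      gaussWeight ζ a (k + l) τ ≤ C * gaussWeight ζ b l τ := by
  obtain ⟨C, hC, hCexp⟩ := exists_one_add_rpow_le_mul_exp |(-ζ)| one_pos
  refine ⟨C, hC, fun a b k l τ ha hb hab hτ => ?_⟩
  have hk : 0 ≤ k := (abs_nonneg _).trans hab
  have hadd : ∀ x, 0 ≤ x → τ + x + k ≤ (1 + k / τ) * (τ + x) := fun x hx => by
    calc τ + x + k = τ + x + k / τ * τ := by field_simp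
      _ ≤ τ + x + k / τ * (τ + x) := by gcongr; linarith
      _ = (1 + k / τ) * (τ + x) := by ring
  have hpow : (τ + a) ^ (-ζ) ≤ C * exp (k / τ) * (τ + b) ^ (-ζ) := by
    calc (τ + a) ^ (-ζ) ≤ (1 + k / τ) ^ |(-ζ)| * (τ + b) ^ (-ζ) :=
          rpow_le_rpow_abs_mul_rpow _ (by positivity) (by positivity)
            (by linarith [hadd b hb, (abs_le.1 hab).2]) (by linarith [hadd a ha, (abs_le.1 hab).1])
      _ ≤ C * exp (k / τ) * (τ + b) ^ (-ζ) := by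
          gcongr
          simpa only [one_mul] using hCexp (k / τ) (by positivity)
  have hexp : exp (k / τ) * exp (-((k + l) / τ)) = exp (-(l / τ)) := by
    rw [← exp_add]
    ring_nf
  calc gaussWeight ζ a (k + l) τ
      ≤ τ ^ (-(1 / 2) : ℝ) * (C * exp (k / τ) * (τ + b) ^ (-ζ)) * exp (-((k + l) / τ)) := by
        unfold gaussWeight
        gcongr
    _ = C * gaussWeight ζ b l τ := by
        rw [gaussWeight, ← hexp]
        ring

lemma exists_besselHeat_bounds_add_sq {ζ : ℝ} (hζ : -1 / 2 < ζ) :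
    ∃ c > 0, ∃ C > 0, ∀ r s τ : ℝ, 0 < r → 0 < s → 0 < τ →
      c * gaussWeight ζ ((r + s) ^ 2 / 8) (3 * ((r - s) ^ 2 / 8)) τ ≤ besselHeat ζ τ r s ∧
        besselHeat ζ τ r s ≤ C * gaussWeight ζ ((r + s) ^ 2 / 8) ((r - s) ^ 2 / 8) τ := by
  obtain ⟨c, hc, C, hC, h⟩ := exists_besselHeat_bounds hζ
  obtain ⟨B, hB, hadd⟩ := exists_gaussWeight_add_le ζ
  refine ⟨c / B, by positivity, C * B, by positivity, fun r s τ hr hs hτ => ?_⟩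
  obtain ⟨hlower, hupper⟩ := h r s τ hr hs hτ
  have hdiff : |(r + s) ^ 2 / 8 - r * s / 2| = (r - s) ^ 2 / 8 := by
    rw [show (r + s) ^ 2 / 8 - r * s / 2 = (r - s) ^ 2 / 8 by ring, abs_of_nonneg (by positivity)]
  constructor
  · have hshift := hadd _ _ _ ((r - s) ^ 2 / 4) τ (by positivity) (by positivity) hdiff.le hτ
    rw [show (r - s) ^ 2 / 8 + (r - s) ^ 2 / 4 = 3 * ((r - s) ^ 2 / 8) by ring] at hshift
    calc c / B * gaussWeight ζ ((r + s) ^ 2 / 8) (3 * ((r - s) ^ 2 / 8)) τ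
        ≤ c / B * (B * gaussWeight ζ (r * s / 2) ((r - s) ^ 2 / 4) τ) := by gcongr
      _ = c * gaussWeight ζ (r * s / 2) ((r - s) ^ 2 / 4) τ := by field_simp
      _ ≤ besselHeat ζ τ r s := hlower
  · rw [abs_sub_comm] at hdiff
    have hshift := hadd _ _ _ ((r - s) ^ 2 / 8) τ (by positivity) (by positivity) hdiff.le hτ
    rw [show (r - s) ^ 2 / 8 + (r - s) ^ 2 / 8 = (r - s) ^ 2 / 4 by ring] at hshift
    calc besselHeat ζ τ r s ≤ C * gaussWeight ζ (r * s / 2) ((r - s) ^ 2 / 4) τ := hupper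
      _ ≤ C * (B * gaussWeight ζ ((r + s) ^ 2 / 8) ((r - s) ^ 2 / 8) τ) := by gcongr
      _ = _ := (mul_assoc _ _ _).symm

/-! ### One-sided stable laws -/

/-- The one-sided `β`-stable law at time `t`: a measure on `(0, ∞)`, encoded as a measure on `ℝ`,
whose Laplace transform is `exp (-t * l ^ β)`. The `α/2`-stable subordinator has `β = α / 2`. -/
structure HasStableLaplace (β t : ℝ) (μ : Measure ℝ) : Prop where
  ae_pos : ∀ᵐ τ ∂μ, 0 < τ
  laplace : ∀ l : ℝ, 0 ≤ l → ∫ τ, exp (-(τ * l)) ∂μ = exp (-(t * l ^ β))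

namespace HasStableLaplace

variable {β t : ℝ} {μ : Measure ℝ}

lemma isProbabilityMeasure (h : HasStableLaplace β t μ) (hβ : β ≠ 0) : IsProbabilityMeasure μ := by
  have hmass := h.laplace 0 le_rfl
  simp only [mul_zero, neg_zero, exp_zero, zero_rpow hβ, integral_const, smul_eq_mul,
    mul_one] at hmass
  exact ⟨(ENNReal.toReal_eq_one_iff _).1 hmass⟩

lemma integrable_exp (h : HasStableLaplace β t μ) {l : ℝ} (hl : 0 ≤ l) :
    Integrable (fun τ => exp (-(τ * l))) μ := by
  by_contra hnot
  exact (exp_pos _).ne ((integral_undef hnot).symm.trans (h.laplace l hl))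

lemma integrable_one_sub_exp (h : HasStableLaplace β t μ) (hβ : β ≠ 0) {l : ℝ} (hl : 0 ≤ l) :
    Integrable (fun τ => 1 - exp (-(τ * l))) μ :=
  have := h.isProbabilityMeasure hβ
  (integrable_const _).sub (h.integrable_exp hl)

lemma integral_one_sub_exp (h : HasStableLaplace β t μ) (hβ : β ≠ 0) {l : ℝ} (hl : 0 ≤ l) :
    ∫ τ, (1 - exp (-(τ * l))) ∂μ = 1 - exp (-(t * l ^ β)) := by
  have := h.isProbabilityMeasure hβ
  rw [integral_sub (integrable_const _) (h.integrable_exp hl), h.laplace l hl,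
    integral_const, probReal_univ, one_smul]

lemma integral_one_sub_exp_le (h : HasStableLaplace β t μ) (hβ : β ≠ 0) {l : ℝ} (hl : 0 ≤ l) :
    ∫ τ, (1 - exp (-(τ * l))) ∂μ ≤ t * l ^ β := by
  rw [h.integral_one_sub_exp hβ hl]
  linarith [one_sub_le_exp_neg (t * l ^ β)]

end HasStableLaplace

lemma lintegral_rpow_mul_exp_neg_mul_rpow {p β t : ℝ} (hp : 0 < p) (hβ : 0 < β) (ht : 0 < t) :
    ∫⁻ l in Ioi 0, ENNReal.ofReal (l ^ (p - 1) * exp (-(t * l ^ β))) =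
      ENNReal.ofReal (t ^ (-(p / β)) * (1 / β) * Gamma (p / β)) := by
  have hint := integrableOn_rpow_mul_exp_neg_mul_rpow (s := p - 1) (by linarith) hβ ht
  have hval := integral_rpow_mul_exp_neg_mul_rpow (q := p - 1) hβ (by linarith) ht
  simp only [neg_mul, sub_add_cancel, neg_div] at hint hval
  rw [← hval, ofReal_integral_eq_lintegral_ofReal hint]
  filter_upwards [ae_restrict_mem measurableSet_Ioi] with l (hl : 0 < l)
  exact mul_nonneg (rpow_nonneg hl.le _) (exp_pos _).le

lemma ofReal_Gamma_mul_rpow_neg {p τ : ℝ} (hp : 0 < p) (hτ : 0 < τ) :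
    ENNReal.ofReal (Gamma p * τ ^ (-p)) =
      ∫⁻ l in Ioi 0, ENNReal.ofReal (l ^ (p - 1) * exp (-(τ * l))) := by
  have h := lintegral_rpow_mul_exp_neg_mul_rpow hp one_pos hτ
  simp only [rpow_one, div_one, mul_one] at h
  rw [h, mul_comm]

namespace HasStableLaplace

variable {β t p : ℝ} {μ : Measure ℝ}

lemma lintegral_Gamma_mul_rpow_neg (h : HasStableLaplace β t μ) (hβ : 0 < β) (ht : 0 < t)
    (hp : 0 < p) :
    ∫⁻ τ, ENNReal.ofReal (Gamma p * τ ^ (-p)) ∂μ =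
      ENNReal.ofReal (t ^ (-(p / β)) * (1 / β) * Gamma (p / β)) := by
  have := h.isProbabilityMeasure hβ.ne'
  have hinner : ∀ l ∈ Ioi (0 : ℝ), ∫⁻ τ, ENNReal.ofReal (l ^ (p - 1) * exp (-(τ * l))) ∂μ =
      ENNReal.ofReal (l ^ (p - 1) * exp (-(t * l ^ β))) := fun l (hl : 0 < l) => by
    rw [← h.laplace l hl.le, ← integral_const_mul,
      ofReal_integral_eq_lintegral_ofReal ((h.integrable_exp hl.le).const_mul _)]
    exact ae_of_all _ fun τ => by positivity
  calc ∫⁻ τ, ENNReal.ofReal (Gamma p * τ ^ (-p)) ∂μ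
      = ∫⁻ τ, (∫⁻ l in Ioi 0, ENNReal.ofReal (l ^ (p - 1) * exp (-(τ * l)))) ∂μ :=
        lintegral_congr_ae (h.ae_pos.mono fun τ => ofReal_Gamma_mul_rpow_neg hp)
    _ = ∫⁻ l in Ioi 0, ∫⁻ τ, ENNReal.ofReal (l ^ (p - 1) * exp (-(τ * l))) ∂μ :=
        lintegral_lintegral_swap (by fun_prop)
    _ = ∫⁻ l in Ioi 0, ENNReal.ofReal (l ^ (p - 1) * exp (-(t * l ^ β))) :=
        setLIntegral_congr_fun measurableSet_Ioi hinner
    _ = _ := lintegral_rpow_mul_exp_neg_mul_rpow hp hβ ht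

lemma ae_nonneg_Gamma_mul_rpow_neg (h : HasStableLaplace β t μ) (hp : 0 < p) :
    0 ≤ᵐ[μ] fun τ => Gamma p * τ ^ (-p) :=
  h.ae_pos.mono fun _ hτ => mul_nonneg (Gamma_pos_of_pos hp).le (rpow_nonneg hτ.le _)

lemma integrable_rpow_neg (h : HasStableLaplace β t μ) (hβ : 0 < β) (ht : 0 < t) (hp : 0 < p) :
    Integrable (fun τ => τ ^ (-p)) μ := by
  suffices Integrable (fun τ => Gamma p * τ ^ (-p)) μ from
    (integrable_const_mul_iff (Gamma_pos_of_pos hp).ne'.isUnit _).1 this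
  refine ⟨Measurable.aestronglyMeasurable (by fun_prop), ?_⟩
  rw [hasFiniteIntegral_iff_ofReal (h.ae_nonneg_Gamma_mul_rpow_neg hp),
    h.lintegral_Gamma_mul_rpow_neg hβ ht hp]
  exact ENNReal.ofReal_lt_top

lemma integral_rpow_neg (h : HasStableLaplace β t μ) (hβ : 0 < β) (ht : 0 < t) (hp : 0 < p) :
    ∫ τ, τ ^ (-p) ∂μ = Gamma (p / β) / (β * Gamma p) * (t ^ (1 / β)) ^ (-p) := by
  have := Gamma_pos_of_pos hp
  have := Gamma_pos_of_pos (div_pos hp hβ)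
  have hscaled : Gamma p * ∫ τ, τ ^ (-p) ∂μ = t ^ (-(p / β)) * (1 / β) * Gamma (p / β) := by
    rw [← integral_const_mul, integral_eq_lintegral_of_nonneg_ae
      (h.ae_nonneg_Gamma_mul_rpow_neg hp) (Measurable.aestronglyMeasurable (by fun_prop)),
      h.lintegral_Gamma_mul_rpow_neg hβ ht hp, ENNReal.toReal_ofReal (by positivity)]
  have hpow : (t ^ (1 / β)) ^ (-p) = t ^ (-(p / β)) := by
    rw [← rpow_mul ht.le]
    ring_nf
  rw [hpow, div_mul_eq_mul_div, eq_div_iff (by positivity), mul_comm β, ← mul_assoc,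
    mul_comm _ (Gamma p), hscaled]
  field_simp

end HasStableLaplace

lemma one_sub_exp_neg_le_indicator_add {ε K u : ℝ} (hε : 0 < ε) (hK : 0 < K) (hu : 0 ≤ u) :
    1 - exp (-u) ≤ (Icc ε K).indicator 1 u +
      (2 * ε * (1 - exp (-(u / ε))) + 2 * (1 - exp (-(u / K)))) := by
  have hnonneg : ∀ v, 0 ≤ v → 0 ≤ 1 - exp (-v) := fun v hv =>
    sub_nonneg.2 (exp_le_one_iff.2 (neg_nonpos.2 hv))
  have hε_nonneg : 0 ≤ 2 * ε * (1 - exp (-(u / ε))) :=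
    mul_nonneg (by positivity) (hnonneg _ (by positivity))
  have hK_nonneg := hnonneg (u / K) (by positivity)
  by_cases hmem : u ∈ Icc ε K
  · rw [indicator_of_mem hmem, Pi.one_apply]
    linarith [exp_pos (-u)]
  rw [indicator_of_notMem hmem, zero_add]
  rcases not_and_or.1 hmem with hsmall | hlarge
  · calc 1 - exp (-u) ≤ u := by linarith [one_sub_le_exp_neg u]
      _ = 2 * ε * (u / ε / 2) := by field_simp
      _ ≤ 2 * ε * (1 - exp (-(u / ε))) := by
        gcongr
        exact half_le_one_sub_exp_neg (by positivity) ((div_le_one hε).2 (not_le.1 hsmall).le)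
      _ ≤ _ := le_add_of_nonneg_right (by positivity)
  · calc 1 - exp (-u) ≤ 2 * (1 / 2) := by linarith [exp_pos (-u)]
      _ ≤ 2 * (1 - exp (-1)) := by
        gcongr
        exact half_le_one_sub_exp_neg zero_le_one le_rfl
      _ ≤ 2 * (1 - exp (-(u / K))) := by
        gcongr
        exact (one_le_div hK).2 (not_le.1 hlarge).le
      _ ≤ _ := le_add_of_nonneg_left hε_nonneg

namespace HasStableLaplace

lemma one_sub_exp_le_measureReal_add {β t l ε K : ℝ} {μ : Measure ℝ}
    (h : HasStableLaplace β t μ) (hβ : β ≠ 0) (hl : 0 ≤ l) (hε : 0 < ε) (hK : 0 < K) :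
    1 - exp (-(t * l ^ β)) ≤ μ.real ((· * l) ⁻¹' Icc ε K) +
      (2 * ε * (t * (l / ε) ^ β) + 2 * (t * (l / K) ^ β)) := by
  have := h.isProbabilityMeasure hβ
  have hset : MeasurableSet ((· * l) ⁻¹' Icc ε K) := (measurable_mul_const l) measurableSet_Icc
  have hind : Integrable (((· * l) ⁻¹' Icc ε K).indicator (1 : ℝ → ℝ)) μ :=
    (integrable_const 1).indicator hset
  have hintε := (h.integrable_one_sub_exp hβ (l := l / ε) (by positivity)).const_mul (2 * ε)
  have hintK := (h.integrable_one_sub_exp hβ (l := l / K) (by positivity)).const_mul 2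
  have hsum : Integrable (fun τ => 2 * ε * (1 - exp (-(τ * (l / ε)))) +
      2 * (1 - exp (-(τ * (l / K))))) μ := hintε.add hintK
  calc 1 - exp (-(t * l ^ β)) = ∫ τ, (1 - exp (-(τ * l))) ∂μ := (h.integral_one_sub_exp hβ hl).symm
    _ ≤ ∫ τ, (((· * l) ⁻¹' Icc ε K).indicator 1 τ +
          (2 * ε * (1 - exp (-(τ * (l / ε)))) + 2 * (1 - exp (-(τ * (l / K)))))) ∂μ := by
        refine integral_mono_ae (h.integrable_one_sub_exp hβ hl) (hind.add hsum) ?_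
        filter_upwards [h.ae_pos] with τ hτ
        rw [← mul_div_assoc, ← mul_div_assoc]
        exact one_sub_exp_neg_le_indicator_add hε hK (mul_nonneg hτ.le hl)
    _ = μ.real ((· * l) ⁻¹' Icc ε K) + (2 * ε * ∫ τ, (1 - exp (-(τ * (l / ε)))) ∂μ +
          2 * ∫ τ, (1 - exp (-(τ * (l / K)))) ∂μ) := by
        rw [integral_add hind hsum, integral_add hintε hintK, integral_const_mul,
          integral_const_mul, integral_indicator_one hset]
    _ ≤ _ := by
        gcongr <;> exact h.integral_one_sub_exp_le hβ (by positivity)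

lemma exists_le_measureReal_preimage_Icc {β : ℝ} (hβ0 : 0 < β) (hβ1 : β < 1) :
    ∃ N ≥ 1, ∀ (t l : ℝ) (μ : Measure ℝ), 0 ≤ t → HasStableLaplace β t μ → 0 ≤ l →
      t * l ^ β ≤ 1 → t * l ^ β / 4 ≤ μ.real ((· * l) ⁻¹' Icc N⁻¹ N) := by
  obtain ⟨N, hN1, hNβ, hNβ'⟩ := ((eventually_ge_atTop 1).and
    (((tendsto_rpow_atTop hβ0).eventually_ge_atTop 16).and
      ((tendsto_rpow_atTop (sub_pos.2 hβ1)).eventually_ge_atTop 16))).exists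
  have hN : 0 < N := by linarith
  refine ⟨N, hN1, fun t l μ ht h hl hle => ?_⟩
  have hsmall : 2 * N⁻¹ * (t * (l / N⁻¹) ^ β) ≤ t * l ^ β / 8 := by
    calc 2 * N⁻¹ * (t * (l / N⁻¹) ^ β) = 2 * (t * l ^ β) / N ^ (1 - β) := by
          rw [div_inv_eq_mul, mul_rpow hl hN.le, rpow_one_sub' hN.le (by linarith)]
          field_simp
      _ ≤ 2 * (t * l ^ β) / 16 := by gcongr
      _ = t * l ^ β / 8 := by ring
  have hlarge : 2 * (t * (l / N) ^ β) ≤ t * l ^ β / 8 := by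
    calc 2 * (t * (l / N) ^ β) = 2 * (t * l ^ β) / N ^ β := by
          rw [div_rpow hl hN.le]
          ring
      _ ≤ 2 * (t * l ^ β) / 16 := by gcongr
      _ = t * l ^ β / 8 := by ring
  have hmass := h.one_sub_exp_le_measureReal_add hβ0.ne' hl (inv_pos.2 hN) hN
  linarith [half_le_one_sub_exp_neg (by positivity : 0 ≤ t * l ^ β) hle]

end HasStableLaplace

/-! ### Stable averages of the Gaussian weight -/

lemma rpow_le_rpow_add_rpow (q : ℝ) {x y z : ℝ} (hx : 0 < x) (hxy : x ≤ y) (hyz : y ≤ z) :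
    y ^ q ≤ x ^ q + z ^ q := by
  have hy := hx.trans_le hxy
  rcases le_total 0 q with hq | hq
  · exact le_add_of_nonneg_of_le (rpow_nonneg hx.le q) (rpow_le_rpow hy.le hyz hq)
  · exact le_add_of_le_of_nonneg (rpow_le_rpow_of_nonpos hx hxy hq)
      (rpow_nonneg (hy.trans_le hyz).le q)

lemma add_rpow_le_mul_one_add_div_rpow (q : ℝ) {a b τ : ℝ} (ha : 0 < a) (hb : 0 ≤ b)
    (hτ : 0 < τ) : (τ + b) ^ q ≤ (a + b) ^ q * (1 + (τ / a) ^ q) := by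
  have hquot : ((τ + b) / (a + b)) ^ q ≤ 1 + (τ / a) ^ q := by
    rcases le_total τ a with hle | hle
    · have h := rpow_le_rpow_add_rpow q (y := (τ + b) / (a + b)) (div_pos hτ ha)
        ((div_le_div_iff₀ ha (by positivity)).2 (by nlinarith))
        (div_le_one_of_le₀ (by linarith) (by positivity))
      rwa [one_rpow, add_comm _ 1] at h
    · have h := rpow_le_rpow_add_rpow q (y := (τ + b) / (a + b)) (z := τ / a) one_pos
        ((one_le_div (by positivity)).2 (by linarith))
        ((div_le_div_iff₀ (by positivity) ha).2 (by nlinarith))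
      rwa [one_rpow] at h
  calc (τ + b) ^ q = (a + b) ^ q * ((τ + b) / (a + b)) ^ q := by
        rw [← mul_rpow (by positivity) (by positivity), mul_div_cancel₀ _ (by positivity)]
    _ ≤ (a + b) ^ q * (1 + (τ / a) ^ q) := by gcongr

lemma gaussWeight_le (ζ k : ℝ) {a b τ : ℝ} (ha : 0 < a) (hb : 0 ≤ b) (hτ : 0 < τ) :
    gaussWeight ζ b k τ ≤ a ^ (-(1 / 2) : ℝ) * (a + b) ^ (-ζ) *
      (((τ / a) ^ (-(1 / 2) : ℝ) + (τ / a) ^ (-(1 / 2 + ζ))) * exp (-(k / τ))) := by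
  have hquot : 0 < τ / a := div_pos hτ ha
  calc gaussWeight ζ b k τ
      ≤ τ ^ (-(1 / 2) : ℝ) * ((a + b) ^ (-ζ) * (1 + (τ / a) ^ (-ζ))) * exp (-(k / τ)) := by
        unfold gaussWeight
        gcongr
        exact add_rpow_le_mul_one_add_div_rpow (-ζ) ha hb hτ
    _ = _ := by
        rw [neg_add, rpow_add hquot, ← mul_div_cancel₀ τ ha.ne', mul_rpow ha.le hquot.le,
          mul_div_cancel₀ τ ha.ne']
        ring

lemma rpow_mul_add_rpow_le_gaussWeight (ζ : ℝ) {a b k m N τ : ℝ} (ha : 0 < a) (hb : 0 ≤ b)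
    (hm : 0 ≤ m) (hN : 1 ≤ N) (hτ : 0 < τ) (hτa : τ ≤ N * a) (haτ : a ≤ N * τ)
    (hk : k ≤ m * a) :
    a ^ (-(1 / 2) : ℝ) * (a + b) ^ (-ζ) ≤
      N ^ |(-(1 / 2) : ℝ)| * N ^ |(-ζ)| * exp (m * N) * gaussWeight ζ b k τ := by
  have hbN : b ≤ N * b := le_mul_of_one_le_left hb hN
  have hexp : 1 ≤ exp (m * N) * exp (-(k / τ)) := by
    rw [← exp_add, one_le_exp_iff, ← sub_eq_add_neg, sub_nonneg, div_le_iff₀ hτ, mul_assoc]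
    exact hk.trans (by gcongr)
  calc a ^ (-(1 / 2) : ℝ) * (a + b) ^ (-ζ)
      ≤ (N ^ |(-(1 / 2) : ℝ)| * τ ^ (-(1 / 2) : ℝ)) * (N ^ |(-ζ)| * (τ + b) ^ (-ζ)) := by
        gcongr
        · exact rpow_le_rpow_abs_mul_rpow _ ha hτ haτ hτa
        · exact rpow_le_rpow_abs_mul_rpow _ (by positivity) (by positivity)
            (by linarith) (by linarith)
    _ ≤ (N ^ |(-(1 / 2) : ℝ)| * τ ^ (-(1 / 2) : ℝ)) * (N ^ |(-ζ)| * (τ + b) ^ (-ζ)) *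
          (exp (m * N) * exp (-(k / τ))) := le_mul_of_one_le_right (by positivity) hexp
    _ = _ := by
        unfold gaussWeight
        ring

lemma exists_rpow_neg_mul_exp_le {p : ℝ} (hp : 0 ≤ p) :
    ∃ C > 0, ∀ u : ℝ, 0 < u → u ^ (-p) * exp (-(1 / u)) ≤ C * (1 - exp (-u)) := by
  obtain ⟨C, hC, hCexp⟩ := exists_one_add_rpow_le_mul_exp (p + 1) one_pos
  refine ⟨C, hC, fun u hu => ?_⟩
  have hbound : u ^ (-p) * (1 + u⁻¹) ≤ C * exp (1 / u) := by
    calc u ^ (-p) * (1 + u⁻¹) ≤ (1 + u⁻¹) ^ p * (1 + u⁻¹) := by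
          rw [rpow_neg hu.le, ← inv_rpow hu.le]
          gcongr
          linarith
      _ = (1 + u⁻¹) ^ (p + 1) := (rpow_add_one (by positivity) p).symm
      _ ≤ C * exp (1 / u) := by
          simpa only [one_mul, one_div] using hCexp u⁻¹ (by positivity)
  calc u ^ (-p) * exp (-(1 / u))
      = u ^ (-p) * (1 + u⁻¹) * exp (-(1 / u)) * (u / (1 + u)) := by
        field_simp
        ring
    _ ≤ C * exp (1 / u) * exp (-(1 / u)) * (u / (1 + u)) := by gcongr
    _ = C * (u / (1 + u)) := by rw [mul_assoc C, ← exp_add, add_neg_cancel, exp_zero, mul_one]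
    _ ≤ C * (1 - exp (-u)) := by
        gcongr
        exact div_one_add_le_one_sub_exp_neg hu.le

/-- The denominator of the kernel estimate at squared length scale `a`: up to constants, the
`β`-stable average of `gaussWeight ζ b k` at time `t` is `t` divided by the sum of
`scaleDenom ζ β b a` over the two scales `a = k` (space) and `a = t ^ (1 / β)` (time). -/
noncomputable def scaleDenom (ζ β b a : ℝ) : ℝ :=
  a ^ (1 / 2 + β) * (a + b) ^ ζ

lemma scaleDenom_nonneg (ζ β : ℝ) {a b : ℝ} (ha : 0 ≤ a) (hb : 0 ≤ b) :
    0 ≤ scaleDenom ζ β b a := by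
  unfold scaleDenom
  positivity

lemma rpow_mul_add_rpow_mul_scaleDenom (ζ β : ℝ) {a b : ℝ} (ha : 0 < a) (hb : 0 ≤ b) :
    a ^ (-(1 / 2) : ℝ) * (a + b) ^ (-ζ) * scaleDenom ζ β b a = a ^ β := by
  have hab : 0 < a + b := by positivity
  rw [scaleDenom, mul_mul_mul_comm, ← rpow_add ha, ← rpow_add hab, neg_add_cancel, rpow_zero,
    mul_one, neg_add_cancel_left]

namespace HasStableLaplace

variable {β t p ζ b k : ℝ} {μ : Measure ℝ}

lemma integrable_div_rpow_neg (h : HasStableLaplace β t μ) (hβ : 0 < β) (ht : 0 < t) (hp : 0 < p)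
    {a : ℝ} (ha : 0 ≤ a) : Integrable (fun τ => (τ / a) ^ (-p)) μ :=
  ((h.integrable_rpow_neg hβ ht hp).div_const (a ^ (-p))).congr
    (h.ae_pos.mono fun _ hτ => (div_rpow hτ.le ha _).symm)

lemma integral_div_rpow_neg (h : HasStableLaplace β t μ) (hβ : 0 < β) (ht : 0 < t) (hp : 0 < p) :
    ∫ τ, (τ / t ^ (1 / β)) ^ (-p) ∂μ = Gamma (p / β) / (β * Gamma p) := by
  rw [integral_congr_ae (h.ae_pos.mono fun _ hτ => div_rpow hτ.le (by positivity) _),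
    integral_div, h.integral_rpow_neg hβ ht hp, mul_div_cancel_right₀ _ (by positivity)]

lemma integrable_gaussWeight_majorant (h : HasStableLaplace β t μ) (hβ : 0 < β) (ht : 0 < t)
    (hζ : -1 / 2 < ζ) {a : ℝ} (ha : 0 ≤ a) :
    Integrable (fun τ => (τ / a) ^ (-(1 / 2) : ℝ) + (τ / a) ^ (-(1 / 2 + ζ))) μ :=
  (h.integrable_div_rpow_neg hβ ht (by norm_num) ha).add
    (h.integrable_div_rpow_neg hβ ht (by linarith) ha)

lemma integrable_gaussWeight (h : HasStableLaplace β t μ) (hβ : 0 < β) (ht : 0 < t)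
    (hζ : -1 / 2 < ζ) (hb : 0 ≤ b) (hk : 0 ≤ k) : Integrable (gaussWeight ζ b k) μ := by
  refine ((h.integrable_gaussWeight_majorant hβ ht hζ zero_le_one).const_mul
    (1 ^ (-(1 / 2) : ℝ) * (1 + b) ^ (-ζ))).mono' (by fun_prop) ?_
  filter_upwards [h.ae_pos] with τ hτ
  rw [norm_of_nonneg (gaussWeight_nonneg ζ k hb hτ)]
  refine (gaussWeight_le ζ k one_pos hb hτ).trans ?_
  gcongr
  exact mul_le_of_le_one_right (by positivity) (exp_le_one_iff.2 (neg_nonpos.2 (by positivity)))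

lemma integral_gaussWeight_mul_scaleDenom_le (h : HasStableLaplace β t μ) (hβ : 0 < β)
    (ht : 0 < t) (hζ : -1 / 2 < ζ) (hb : 0 ≤ b) (hk : 0 ≤ k) {a : ℝ} (ha : 0 < a) {f : ℝ → ℝ}
    (hf : Integrable f μ) (hle : ∀ τ, 0 < τ →
      ((τ / a) ^ (-(1 / 2) : ℝ) + (τ / a) ^ (-(1 / 2 + ζ))) * exp (-(k / τ)) ≤ f τ) :
    (∫ τ, gaussWeight ζ b k τ ∂μ) * scaleDenom ζ β b a ≤ (∫ τ, f τ ∂μ) * a ^ β := by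
  have hbound : ∫ τ, gaussWeight ζ b k τ ∂μ ≤
      a ^ (-(1 / 2) : ℝ) * (a + b) ^ (-ζ) * ∫ τ, f τ ∂μ := by
    rw [← integral_const_mul]
    refine integral_mono_ae (h.integrable_gaussWeight hβ ht hζ hb hk) (hf.const_mul _) ?_
    filter_upwards [h.ae_pos] with τ hτ
    refine (gaussWeight_le ζ k ha hb hτ).trans ?_
    gcongr
    exact hle τ hτ
  have hdenom := scaleDenom_nonneg ζ β ha.le hb
  calc (∫ τ, gaussWeight ζ b k τ ∂μ) * scaleDenom ζ β b a
      ≤ a ^ (-(1 / 2) : ℝ) * (a + b) ^ (-ζ) * (∫ τ, f τ ∂μ) * scaleDenom ζ β b a := by gcongr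
    _ = (∫ τ, f τ ∂μ) * a ^ β := by
        rw [← rpow_mul_add_rpow_mul_scaleDenom ζ β ha hb]
        ring

lemma exists_integral_gaussWeight_mul_scaleDenom_time_le (hβ : 0 < β) (hζ : -1 / 2 < ζ) :
    ∃ C > 0, ∀ (t b k : ℝ) (μ : Measure ℝ), 0 < t → HasStableLaplace β t μ → 0 ≤ b → 0 ≤ k →
      (∫ τ, gaussWeight ζ b k τ ∂μ) * scaleDenom ζ β b (t ^ (1 / β)) ≤ C * t := by
  have hhalf : (0 : ℝ) < 1 / 2 := by norm_num
  have hsum : 0 < 1 / 2 + ζ := by linarith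
  have hmoment_pos : ∀ p, 0 < p → 0 < Gamma (p / β) / (β * Gamma p) := fun p hp =>
    div_pos (Gamma_pos_of_pos (div_pos hp hβ)) (mul_pos hβ (Gamma_pos_of_pos hp))
  refine ⟨_, add_pos (hmoment_pos _ hhalf) (hmoment_pos _ hsum), fun t b k μ ht h hb hk => ?_⟩
  have hpow : (t ^ (1 / β)) ^ β = t := by rw [one_div, rpow_inv_rpow ht.le hβ.ne']
  have hbound := h.integral_gaussWeight_mul_scaleDenom_le hβ ht hζ hb hk
    (rpow_pos_of_pos ht (1 / β)) (h.integrable_gaussWeight_majorant hβ ht hζ (by positivity))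
    fun τ hτ => mul_le_of_le_one_right (by positivity)
      (exp_le_one_iff.2 (neg_nonpos.2 (by positivity)))
  rwa [integral_add (h.integrable_div_rpow_neg hβ ht hhalf (by positivity))
    (h.integrable_div_rpow_neg hβ ht hsum (by positivity)), h.integral_div_rpow_neg hβ ht hhalf,
    h.integral_div_rpow_neg hβ ht hsum, hpow] at hbound

lemma exists_integral_gaussWeight_mul_scaleDenom_space_le (hβ : 0 < β) (hζ : -1 / 2 < ζ) :
    ∃ C > 0, ∀ (t b k : ℝ) (μ : Measure ℝ), 0 < t → HasStableLaplace β t μ → 0 ≤ b → 0 ≤ k →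
      (∫ τ, gaussWeight ζ b k τ ∂μ) * scaleDenom ζ β b k ≤ C * t := by
  obtain ⟨A, hA, hAbound⟩ := exists_rpow_neg_mul_exp_le (show (0 : ℝ) ≤ 1 / 2 by norm_num)
  obtain ⟨B, hB, hBbound⟩ := exists_rpow_neg_mul_exp_le (show (0 : ℝ) ≤ 1 / 2 + ζ by linarith)
  refine ⟨A + B, by positivity, fun t b k μ ht h hb hk => ?_⟩
  rcases hk.eq_or_lt with rfl | hk
  · rw [scaleDenom, zero_rpow (by positivity), zero_mul, mul_zero]
    positivity
  have hle : ∀ τ, 0 < τ → ((τ / k) ^ (-(1 / 2) : ℝ) + (τ / k) ^ (-(1 / 2 + ζ))) *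
      exp (-(k / τ)) ≤ (A + B) * (1 - exp (-(τ * k⁻¹))) := fun τ hτ => by
    rw [← div_eq_mul_inv, ← one_div_div τ k, add_mul, add_mul]
    exact add_le_add (hAbound _ (by positivity)) (hBbound _ (by positivity))
  calc (∫ τ, gaussWeight ζ b k τ ∂μ) * scaleDenom ζ β b k
      ≤ (∫ τ, (A + B) * (1 - exp (-(τ * k⁻¹))) ∂μ) * k ^ β :=
        h.integral_gaussWeight_mul_scaleDenom_le hβ ht hζ hb hk.le hk
          ((h.integrable_one_sub_exp hβ.ne' (by positivity)).const_mul _) hle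
    _ = (A + B) * (∫ τ, (1 - exp (-(τ * k⁻¹))) ∂μ) * k ^ β := by rw [integral_const_mul]
    _ ≤ (A + B) * (t * k⁻¹ ^ β) * k ^ β := by
        gcongr
        exact h.integral_one_sub_exp_le hβ.ne' (by positivity)
    _ = (A + B) * t := by
        rw [inv_rpow hk.le]
        field_simp

lemma exists_integral_gaussWeight_mul_scaleDenom_add_le (hβ : 0 < β) (hζ : -1 / 2 < ζ) :
    ∃ C > 0, ∀ (t b k : ℝ) (μ : Measure ℝ), 0 < t → HasStableLaplace β t μ → 0 ≤ b → 0 ≤ k →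
      (∫ τ, gaussWeight ζ b k τ ∂μ) *
        (scaleDenom ζ β b k + scaleDenom ζ β b (t ^ (1 / β))) ≤ C * t := by
  obtain ⟨A, hA, hspace⟩ := exists_integral_gaussWeight_mul_scaleDenom_space_le hβ hζ
  obtain ⟨B, hB, htime⟩ := exists_integral_gaussWeight_mul_scaleDenom_time_le hβ hζ
  refine ⟨A + B, by positivity, fun t b k μ ht h hb hk => ?_⟩
  rw [mul_add, add_mul]
  exact add_le_add (hspace t b k μ ht h hb hk) (htime t b k μ ht h hb hk)

lemma exists_measureReal_mul_le_integral_gaussWeight (hβ : 0 < β) (hζ : -1 / 2 < ζ) {m N : ℝ}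
    (hm : 0 ≤ m) (hN : 1 ≤ N) :
    ∃ c > 0, ∀ (t a b k : ℝ) (μ : Measure ℝ), 0 < t → HasStableLaplace β t μ → 0 < a → 0 ≤ b →
      0 ≤ k → k ≤ m * a → c * (a ^ (-(1 / 2) : ℝ) * (a + b) ^ (-ζ)) *
        μ.real ((· * a⁻¹) ⁻¹' Icc N⁻¹ N) ≤ ∫ τ, gaussWeight ζ b k τ ∂μ := by
  have hN0 : 0 < N := by linarith
  refine ⟨(N ^ |(-(1 / 2) : ℝ)| * N ^ |(-ζ)| * exp (m * N))⁻¹, by positivity,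
    fun t a b k μ ht h ha hb hk hka => ?_⟩
  have := h.isProbabilityMeasure hβ.ne'
  have hmeas : MeasurableSet ((· * a⁻¹) ⁻¹' Icc N⁻¹ N) :=
    (measurable_mul_const a⁻¹) measurableSet_Icc
  rw [mul_comm, ← smul_eq_mul, ← integral_indicator_const _ hmeas]
  refine integral_mono_ae ((integrable_const _).indicator hmeas)
    (h.integrable_gaussWeight hβ ht hζ hb hk) ?_
  filter_upwards [h.ae_pos] with τ hτ
  refine indicator_apply_le' (fun hmem => ?_) fun _ => gaussWeight_nonneg ζ k hb hτ
  obtain ⟨hlower, hupper⟩ : N⁻¹ ≤ τ * a⁻¹ ∧ τ * a⁻¹ ≤ N := hmem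
  rw [← div_eq_mul_inv, le_div_iff₀ ha, inv_mul_le_iff₀ hN0] at hlower
  rw [← div_eq_mul_inv, div_le_iff₀ ha] at hupper
  rw [inv_mul_le_iff₀ (by positivity)]
  exact rpow_mul_add_rpow_le_gaussWeight ζ ha hb hm hN hτ hupper hlower hka

lemma exists_le_integral_gaussWeight_mul_scaleDenom (hβ0 : 0 < β) (hβ1 : β < 1)
    (hζ : -1 / 2 < ζ) {m : ℝ} (hm : 0 ≤ m) :
    ∃ c > 0, ∀ (t a b k : ℝ) (μ : Measure ℝ), 0 < t → HasStableLaplace β t μ → 0 < a → 0 ≤ b →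
      0 ≤ k → k ≤ m * a → t ≤ a ^ β →
      c * t ≤ (∫ τ, gaussWeight ζ b k τ ∂μ) * scaleDenom ζ β b a := by
  obtain ⟨N, hN, hmass⟩ := exists_le_measureReal_preimage_Icc hβ0 hβ1
  obtain ⟨c, hc, hweight⟩ := exists_measureReal_mul_le_integral_gaussWeight hβ0 hζ hm hN
  refine ⟨c / 4, by positivity, fun t a b k μ ht h ha hb hk hka hta => ?_⟩
  have hmass_a : t * a⁻¹ ^ β / 4 ≤ μ.real ((· * a⁻¹) ⁻¹' Icc N⁻¹ N) := by
    refine hmass t a⁻¹ μ ht.le h (by positivity) ?_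
    rwa [inv_rpow ha.le, ← div_eq_mul_inv, div_le_one (by positivity)]
  have hdenom := scaleDenom_nonneg ζ β ha.le hb
  calc c / 4 * t = c * a ^ β * (t * a⁻¹ ^ β / 4) := by
        rw [inv_rpow ha.le]
        field_simp
    _ ≤ c * a ^ β * μ.real ((· * a⁻¹) ⁻¹' Icc N⁻¹ N) := by gcongr
    _ = c * (a ^ (-(1 / 2) : ℝ) * (a + b) ^ (-ζ)) * μ.real ((· * a⁻¹) ⁻¹' Icc N⁻¹ N) *
          scaleDenom ζ β b a := by
        rw [← rpow_mul_add_rpow_mul_scaleDenom ζ β ha hb]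
        ring
    _ ≤ (∫ τ, gaussWeight ζ b k τ ∂μ) * scaleDenom ζ β b a := by
        gcongr
        exact hweight t a b k μ ht h ha hb hk hka

lemma exists_le_integral_gaussWeight_mul_scaleDenom_add (hβ0 : 0 < β) (hβ1 : β < 1)
    (hζ : -1 / 2 < ζ) {m : ℝ} (hm : 0 ≤ m) :
    ∃ c > 0, ∀ (t b k : ℝ) (μ : Measure ℝ), 0 < t → HasStableLaplace β t μ → 0 ≤ b → 0 ≤ k →
      c * t ≤ (∫ τ, gaussWeight ζ b (m * k) τ ∂μ) *
        (scaleDenom ζ β b k + scaleDenom ζ β b (t ^ (1 / β))) := by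
  obtain ⟨c, hc, hscale⟩ := exists_le_integral_gaussWeight_mul_scaleDenom hβ0 hβ1 hζ hm
  refine ⟨c, hc, fun t b k μ ht h hb hk => ?_⟩
  have htime : 0 < t ^ (1 / β) := by positivity
  have hmax : scaleDenom ζ β b (max k (t ^ (1 / β))) ≤
      scaleDenom ζ β b k + scaleDenom ζ β b (t ^ (1 / β)) := by
    rcases max_choice k (t ^ (1 / β)) with hmax | hmax <;> rw [hmax]
    · exact le_add_of_nonneg_right (scaleDenom_nonneg ζ β htime.le hb)
    · exact le_add_of_nonneg_left (scaleDenom_nonneg ζ β hk hb)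
  have ht_le : t ≤ max k (t ^ (1 / β)) ^ β := by
    calc t = (t ^ (1 / β)) ^ β := by rw [one_div, rpow_inv_rpow ht.le hβ0.ne']
      _ ≤ max k (t ^ (1 / β)) ^ β := by
        gcongr
        exact le_max_right _ _
  refine (hscale t (max k (t ^ (1 / β))) b (m * k) μ ht h (lt_max_of_lt_right htime) hb
    (by positivity) (by gcongr; exact le_max_left _ _) ht_le).trans ?_
  gcongr
  exact integral_nonneg_of_ae (h.ae_pos.mono fun τ hτ => gaussWeight_nonneg ζ _ hb hτ)

end HasStableLaplace

/-! ### The subordinated kernel -/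

/-- The law of the subordinator at time `t`: the measure with density `σ t` on `(0, ∞)`. -/
noncomputable def subordinatorMeasure (σ : ℝ → ℝ → ℝ) (t : ℝ) : Measure ℝ :=
  (volume.restrict (Ioi 0)).withDensity fun τ => ENNReal.ofReal (σ t τ)

namespace IsStableSubordinatorDensity

variable {α t : ℝ} {σ : ℝ → ℝ → ℝ}

lemma integral_subordinatorMeasure (hσ : IsStableSubordinatorDensity α σ) (ht : 0 < t)
    (f : ℝ → ℝ) : ∫ τ, f τ ∂(subordinatorMeasure σ t) = ∫ τ in Ioi 0, f τ * σ t τ := by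
  rw [subordinatorMeasure, integral_withDensity_eq_integral_toReal_smul
    (hσ.2.1 t ht).ennreal_ofReal (ae_of_all _ fun _ => ENNReal.ofReal_lt_top)]
  refine setIntegral_congr_fun measurableSet_Ioi fun τ hτ => ?_
  simp only [ENNReal.toReal_ofReal (hσ.1 t ht τ hτ), smul_eq_mul, mul_comm]

lemma hasStableLaplace (hσ : IsStableSubordinatorDensity α σ) (ht : 0 < t) :
    HasStableLaplace (α / 2) t (subordinatorMeasure σ t) where
  ae_pos := (withDensity_absolutelyContinuous _ _).ae_le (ae_restrict_mem measurableSet_Ioi)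
  laplace l hl := by
    simpa only [neg_mul, ← hσ.integral_subordinatorMeasure ht] using hσ.2.2 t l ht hl

lemma subKernel_nonneg {ζ r s : ℝ} (hσ : IsStableSubordinatorDensity α σ) (hζ : -1 / 2 < ζ)
    (hr : 0 ≤ r) (hs : 0 ≤ s) (ht : 0 < t) : 0 ≤ subKernel ζ σ t r s :=
  setIntegral_nonneg measurableSet_Ioi fun τ hτ =>
    mul_nonneg (besselHeat_nonneg hζ hr hs (mem_Ioi.1 hτ).le) (hσ.1 t ht τ hτ)

end IsStableSubordinatorDensity

lemma measurable_besselHeat (ζ r s : ℝ) : Measurable fun τ => besselHeat ζ τ r s := by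
  have hbessel : Measurable fun τ => besselI (ζ - 1 / 2) (r * s / (2 * τ)) :=
    (measurable_besselI _).comp (by fun_prop)
  unfold besselHeat
  fun_prop

lemma exists_subKernel_bounds {ζ α : ℝ} (hζ : -1 / 2 < ζ) (hα : 0 < α) :
    ∃ c > 0, ∃ C > 0, ∀ (σ : ℝ → ℝ → ℝ) (r s t : ℝ), IsStableSubordinatorDensity α σ →
      0 < r → 0 < s → 0 < t →
      c * ∫ τ, gaussWeight ζ ((r + s) ^ 2 / 8) (3 * ((r - s) ^ 2 / 8)) τ
        ∂(subordinatorMeasure σ t) ≤ subKernel ζ σ t r s ∧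
      subKernel ζ σ t r s ≤ C * ∫ τ, gaussWeight ζ ((r + s) ^ 2 / 8) ((r - s) ^ 2 / 8) τ
        ∂(subordinatorMeasure σ t) := by
  obtain ⟨c, hc, C, hC, hbounds⟩ := exists_besselHeat_bounds_add_sq hζ
  refine ⟨c, hc, C, hC, fun σ r s t hσ hr hs ht => ?_⟩
  have h := hσ.hasStableLaplace ht
  have hweight : ∀ k, 0 ≤ k →
      Integrable (gaussWeight ζ ((r + s) ^ 2 / 8) k) (subordinatorMeasure σ t) :=
    fun k hk => h.integrable_gaussWeight (half_pos hα) ht hζ (by positivity) hk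
  have hlower := (hweight (3 * ((r - s) ^ 2 / 8)) (by positivity)).const_mul c
  have hupper := (hweight ((r - s) ^ 2 / 8) (by positivity)).const_mul C
  have hheat : Integrable (fun τ => besselHeat ζ τ r s) (subordinatorMeasure σ t) := by
    refine hupper.mono' (measurable_besselHeat ζ r s).aestronglyMeasurable ?_
    filter_upwards [h.ae_pos] with τ hτ
    rw [norm_of_nonneg (besselHeat_nonneg hζ hr.le hs.le hτ.le)]
    exact (hbounds r s τ hr hs hτ).2
  rw [subKernel, ← hσ.integral_subordinatorMeasure ht, ← integral_const_mul, ← integral_const_mul]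
  exact ⟨integral_mono_ae hlower hheat (h.ae_pos.mono fun τ hτ => (hbounds r s τ hr hs hτ).1),
    integral_mono_ae hheat hupper (h.ae_pos.mono fun τ hτ => (hbounds r s τ hr hs hτ).2)⟩

lemma exists_subKernel_mul_scaleDenom_bounds {ζ α : ℝ} (hζ : -1 / 2 < ζ) (hα0 : 0 < α)
    (hα2 : α < 2) :
    ∃ c > 0, ∃ C > 0, ∀ (σ : ℝ → ℝ → ℝ) (r s t : ℝ), IsStableSubordinatorDensity α σ →
      0 < r → 0 < s → 0 < t →
      c * t ≤ subKernel ζ σ t r s * (scaleDenom ζ (α / 2) ((r + s) ^ 2 / 8) ((r - s) ^ 2 / 8) +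
        scaleDenom ζ (α / 2) ((r + s) ^ 2 / 8) (t ^ (1 / (α / 2)))) ∧
      subKernel ζ σ t r s * (scaleDenom ζ (α / 2) ((r + s) ^ 2 / 8) ((r - s) ^ 2 / 8) +
        scaleDenom ζ (α / 2) ((r + s) ^ 2 / 8) (t ^ (1 / (α / 2)))) ≤ C * t := by
  obtain ⟨c, hc, C, hC, hkernel⟩ := exists_subKernel_bounds hζ hα0
  obtain ⟨c', hc', hlower⟩ := HasStableLaplace.exists_le_integral_gaussWeight_mul_scaleDenom_add
    (half_pos hα0) (by linarith) hζ zero_le_three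
  obtain ⟨C', hC', hupper⟩ := HasStableLaplace.exists_integral_gaussWeight_mul_scaleDenom_add_le
    (half_pos hα0) hζ
  refine ⟨c * c', by positivity, C * C', by positivity, fun σ r s t hσ hr hs ht => ?_⟩
  have h := hσ.hasStableLaplace ht
  obtain ⟨hkernel_lower, hkernel_upper⟩ := hkernel σ r s t hσ hr hs ht
  have hdenom := add_nonneg
    (scaleDenom_nonneg ζ (α / 2) (a := (r - s) ^ 2 / 8) (b := (r + s) ^ 2 / 8)
      (by positivity) (by positivity))
    (scaleDenom_nonneg ζ (α / 2) (a := t ^ (1 / (α / 2))) (b := (r + s) ^ 2 / 8)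
      (by positivity) (by positivity))
  have hlower_t := hlower t ((r + s) ^ 2 / 8) ((r - s) ^ 2 / 8) _ ht h
    (by positivity) (by positivity)
  have hupper_t := hupper t ((r + s) ^ 2 / 8) ((r - s) ^ 2 / 8) _ ht h
    (by positivity) (by positivity)
  constructor
  · refine le_trans ?_ (mul_le_mul_of_nonneg_right hkernel_lower hdenom)
    rw [mul_assoc, mul_assoc]
    gcongr
  · refine (mul_le_mul_of_nonneg_right hkernel_upper hdenom).trans ?_
    rw [mul_assoc, mul_assoc]
    gcongr

lemma rpow_mul_rpow_le {p m x x' y y' : ℝ} (q : ℝ) (hp : 0 ≤ p) (hm : 0 ≤ m) (hx : 0 ≤ x)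
    (hx' : 0 ≤ x') (hy : 0 < y) (hy' : 0 < y') (hxx' : x ≤ m * x') (hyy' : y ≤ m * y')
    (hy'y : y' ≤ m * y) : x ^ p * y ^ q ≤ m ^ p * m ^ |q| * (x' ^ p * y' ^ q) := by
  calc x ^ p * y ^ q ≤ (m * x') ^ p * (m ^ |q| * y' ^ q) := by
        gcongr
        exact rpow_le_rpow_abs_mul_rpow q hy hy' hyy' hy'y
    _ = _ := by
        rw [mul_rpow hm hx']
        ring

lemma exists_scaleDenom_add_bounds (ζ : ℝ) {α : ℝ} (hα : 0 < α) :
    ∃ κ > 0, ∀ r s t : ℝ, 0 < r → 0 < s → 0 < t →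
      scaleDenom ζ (α / 2) ((r + s) ^ 2 / 8) ((r - s) ^ 2 / 8) +
          scaleDenom ζ (α / 2) ((r + s) ^ 2 / 8) (t ^ (1 / (α / 2))) ≤
        κ * (|r - s| ^ (1 + α) * (r + s) ^ (2 * ζ) +
          t ^ ((1 + α) / α) * (t ^ (1 / α) + r + s) ^ (2 * ζ)) ∧
      |r - s| ^ (1 + α) * (r + s) ^ (2 * ζ) +
          t ^ ((1 + α) / α) * (t ^ (1 / α) + r + s) ^ (2 * ζ) ≤
        κ * (scaleDenom ζ (α / 2) ((r + s) ^ 2 / 8) ((r - s) ^ 2 / 8) +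
          scaleDenom ζ (α / 2) ((r + s) ^ 2 / 8) (t ^ (1 / (α / 2)))) := by
  refine ⟨16 ^ (1 / 2 + α / 2) * 16 ^ |ζ|, by positivity, fun r s t hr hs ht => ?_⟩
  have hsq : ∀ x q : ℝ, 0 ≤ x → x ^ (2 * q) = (x ^ 2) ^ q := fun x q hx => by
    rw [rpow_mul hx, rpow_two]
  set T := t ^ (1 / α)
  have hT : 0 < T := by positivity
  have htime : t ^ (1 / (α / 2)) = T ^ 2 := by
    rw [← rpow_two, ← rpow_mul ht.le]
    field_simp
  have htpow : t ^ ((1 + α) / α) = (T ^ 2) ^ (1 / 2 + α / 2) := by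
    rw [← hsq T _ hT.le, ← rpow_mul ht.le]
    field_simp
  have hspow : |r - s| ^ (1 + α) = ((r - s) ^ 2) ^ (1 / 2 + α / 2) := by
    rw [← sq_abs, ← hsq _ _ (abs_nonneg _)]
    ring_nf
  rw [htime, htpow, hspow, hsq _ ζ (by positivity), hsq _ ζ (by positivity), scaleDenom,
    scaleDenom, mul_add, mul_add]
  have hrs := mul_pos hr hs
  have hTr := mul_pos hT hr
  have hTs := mul_pos hT hs
  constructor <;> gcongr ?_ + ?_ <;>
    refine rpow_mul_rpow_le ζ (by positivity) (by norm_num) (by positivity) (by positivity)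
      (by positivity) (by positivity) ?_ ?_ ?_ <;>
    nlinarith [sq_nonneg (r - s), sq_nonneg (T - (r + s))]

theorem stmt2 (ζ α : ℝ) (hζ : -1/2 < ζ) (hα0 : 0 < α) (hα2 : α < 2)
    (σ : ℝ → ℝ → ℝ) (hσ : IsStableSubordinatorDensity α σ) :
    ∃ c C : ℝ, 0 < c ∧ 0 < C ∧
      ∀ r s t : ℝ, 0 < r → 0 < s → 0 < t →
        c * t / (|r - s| ^ (1 + α) * (r + s) ^ (2 * ζ)
              + t ^ ((1 + α) / α) * (t ^ (1 / α) + r + s) ^ (2 * ζ))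
            ≤ subKernel ζ σ t r s ∧
          subKernel ζ σ t r s
            ≤ C * t / (|r - s| ^ (1 + α) * (r + s) ^ (2 * ζ)
              + t ^ ((1 + α) / α) * (t ^ (1 / α) + r + s) ^ (2 * ζ)) := by
  obtain ⟨c, hc, C, hC, hkernel⟩ := exists_subKernel_mul_scaleDenom_bounds hζ hα0 hα2
  obtain ⟨κ, hκ, hdenom⟩ := exists_scaleDenom_add_bounds ζ hα0
  refine ⟨c / κ, C * κ, by positivity, by positivity, fun r s t hr hs ht => ?_⟩
  obtain ⟨hlower, hupper⟩ := hkernel σ r s t hσ hr hs ht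
  obtain ⟨hdenom_le, hle_denom⟩ := hdenom r s t hr hs ht
  have hK := hσ.subKernel_nonneg hζ hr.le hs.le ht
  rw [div_le_iff₀ (by positivity), le_div_iff₀ (by positivity), div_mul_eq_mul_div,
    div_le_iff₀' hκ, mul_right_comm C, mul_comm _ κ]
  constructor
  · refine hlower.trans ((mul_le_mul_of_nonneg_left hdenom_le hK).trans_eq ?_)
    exact mul_left_comm _ _ _
  · refine (mul_le_mul_of_nonneg_left hle_denom hK).trans ?_
    rw [mul_left_comm]
    gcongr
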